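/- arXiv:1610.02432 — 2 statements merged into one kernel-verified Lean document; each statement's English description precedes it below -/
import Mathlib

section
/- Let A ∈ ℝ^{n×n}, B ∈ ℝ^{n×m}, C ∈ ℝ^{p×n}, and assume that the generalized unstable subspace X₊(A) is contained in ker C. Let X be the unique symmetric positive semidefinite solution of the Lyapunov equation AᵀX + XA + CᵀC = 0 satisfying X₊(A) ⊆ ker X. Then the transfer function S(s) = C(sI − A)⁻¹B satisfies ‖S‖²_{H₂} = tr(BᵀXB), where ‖S‖²_{H₂} = (1/2π)∫_{−∞}^{+∞} tr(S(−iω)ᵀS(iω)) dω. -/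
/-!
On the axis `s = iω`, a resolvent function `φ((s - f)⁻¹v)` is a sum of terms
`(s - l)^(-(i+1)) φ((f - l)ⁱ v)`, `l` running over the eigenvalues of `f`. If `φ` kills the
generalized unstable subspace, only poles with `Re l < 0` survive; the terms with `i ≥ 1` integrate
to `0`, and `(s - l)⁻¹` differs from `(s + 1)⁻¹` by an integrable function of integral `0`. Hence
`φ((s - f)⁻¹v)` is `φ(v)(s + 1)⁻¹` up to an integrable function of integral `0`.

Sandwiching the Lyapunov equation between resolvents gives
`S(-s)ᵀS(s) = T(s) + T(-s)ᵀ` with `T(s) = BᵀX(s - A)⁻¹B`, and `X` kills the unstable subspace.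
So the integral is that of `tr(BᵀXB) ((1 + iω)⁻¹ + (1 - iω)⁻¹) = 2 tr(BᵀXB) / (1 + ω²)`.
-/

open Matrix Filter Topology Function
open scoped Kronecker

noncomputable section

/-- Complexification of a real matrix. -/
def cplx {α β : Type*} (M : Matrix α β ℝ) : Matrix α β ℂ := M.map Complex.ofReal

/-- Transfer function `S(s) = C (sI - A)⁻¹ B` of the system `ẋ = Ax + Bu, y = Cx`. -/
def transfer {n m p : ℕ} (A : Matrix (Fin n) (Fin n) ℝ) (B : Matrix (Fin n) (Fin m) ℝ)
    (C : Matrix (Fin p) (Fin n) ℝ) (s : ℂ) : Matrix (Fin p) (Fin m) ℂ :=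
  cplx C * (s • (1 : Matrix (Fin n) (Fin n) ℂ) - cplx A)⁻¹ * cplx B

/-- Squared H₂-norm: `(1/2π) ∫ tr(S(-iω)ᵀ S(iω)) dω`. -/
def H2normSq {α β : Type*} [Fintype α] [Fintype β] (S : ℂ → Matrix α β ℂ) : ℝ :=
  (1 / (2 * Real.pi)) *
    ∫ ω : ℝ, ((S (-((ω : ℂ) * Complex.I)))ᵀ * S ((ω : ℂ) * Complex.I)).trace.re

/-- Largest singular value of a complex matrix (its ℓ²-operator norm). -/
def sigmaMax {α β : Type*} [Fintype α] [Fintype β] [DecidableEq β] (M : Matrix α β ℂ) : ℝ :=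
  ‖LinearMap.toContinuousLinearMap (Matrix.toEuclideanLin M)‖

/-- Smallest singular value of a complex matrix: `√(λ_min(Mᴴ M))`. -/
def sigmaMinC {α β : Type*} [Fintype α] [Fintype β] [DecidableEq β] (M : Matrix α β ℂ) : ℝ :=
  Real.sqrt (sInf (spectrum ℝ (Mᴴ * M)))

/-- H∞-norm: `sup_{ω ∈ ℝ} σ_max(S(iω))`. -/
def HinfNorm {α β : Type*} [Fintype α] [Fintype β] [DecidableEq β] (S : ℂ → Matrix α β ℂ) : ℝ :=
  ⨆ ω : ℝ, sigmaMax (S ((ω : ℂ) * Complex.I))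

/-- Generalized unstable subspace `X₊(A)`: direct sum of the generalized eigenspaces of (the
complexification of) `A` corresponding to eigenvalues with nonnegative real part. -/
def unstableSubspace {n : ℕ} (A : Matrix (Fin n) (Fin n) ℝ) : Submodule ℂ (Fin n → ℂ) :=
  ⨆ μ ∈ {μ : ℂ | 0 ≤ μ.re}, Module.End.maxGenEigenspace (Matrix.toLin' (cplx A)) μ

/-- A complex square matrix is Hurwitz if all its eigenvalues have negative real part. -/
def IsHurwitz {n : ℕ} (M : Matrix (Fin n) (Fin n) ℂ) : Prop :=
  ∀ μ ∈ spectrum ℂ M, μ.re < 0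

/-- Transfer function `S_λ(s) = λ (sI - A + λB)⁻¹ E` of the auxiliary system. -/
def auxS {n r : ℕ} (A B : Matrix (Fin n) (Fin n) ℝ) (E : Matrix (Fin n) (Fin r) ℝ)
    (lam : ℝ) (s : ℂ) : Matrix (Fin n) (Fin r) ℂ :=
  (lam : ℂ) • ((s • (1 : Matrix (Fin n) (Fin n) ℂ) - cplx A + (lam : ℂ) • cplx B)⁻¹ * cplx E)

/-- Transfer function `S(s) = (L⊗Iₙ)(sI - I_N⊗A + L⊗B)⁻¹(M⊗E)` of the original network. -/
def netS {N n r m : ℕ} (L : Matrix (Fin N) (Fin N) ℝ) (A B : Matrix (Fin n) (Fin n) ℝ)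
    (E : Matrix (Fin n) (Fin r) ℝ) (M : Matrix (Fin N) (Fin m) ℝ) (s : ℂ) :
    Matrix (Fin N × Fin n) (Fin m × Fin r) ℂ :=
  cplx (L ⊗ₖ (1 : Matrix (Fin n) (Fin n) ℝ)) *
    (s • (1 : Matrix (Fin N × Fin n) (Fin N × Fin n) ℂ) -
      cplx ((1 : Matrix (Fin N) (Fin N) ℝ) ⊗ₖ A - L ⊗ₖ B))⁻¹ *
    cplx (M ⊗ₖ E)

/-- Transfer function `Ŝ(s) = (LP⊗Iₙ)(sI - I_k⊗A + L̂⊗B)⁻¹(M̂⊗E)` of the reduced network. -/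
def netShat {N n r m k : ℕ} (L : Matrix (Fin N) (Fin N) ℝ) (P : Matrix (Fin N) (Fin k) ℝ)
    (Lhat : Matrix (Fin k) (Fin k) ℝ) (Mhat : Matrix (Fin k) (Fin m) ℝ)
    (A B : Matrix (Fin n) (Fin n) ℝ) (E : Matrix (Fin n) (Fin r) ℝ) (s : ℂ) :
    Matrix (Fin N × Fin n) (Fin m × Fin r) ℂ :=
  cplx ((L * P) ⊗ₖ (1 : Matrix (Fin n) (Fin n) ℝ)) *
    (s • (1 : Matrix (Fin k × Fin n) (Fin k × Fin n) ℂ) -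
      cplx ((1 : Matrix (Fin k) (Fin k) ℝ) ⊗ₖ A - Lhat ⊗ₖ B))⁻¹ *
    cplx (Mhat ⊗ₖ E)

/-- Transfer function `S(s) = L (sI + L)⁻¹ M` of the single-integrator network. -/
def singleS {N m : ℕ} (L : Matrix (Fin N) (Fin N) ℝ) (M : Matrix (Fin N) (Fin m) ℝ)
    (s : ℂ) : Matrix (Fin N) (Fin m) ℂ :=
  cplx L * (s • (1 : Matrix (Fin N) (Fin N) ℂ) + cplx L)⁻¹ * cplx M

/-- Transfer function `Ŝ(s) = LP (sI + L̂)⁻¹ M̂` of the reduced single-integrator network. -/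
def singleShat {N m k : ℕ} (L : Matrix (Fin N) (Fin N) ℝ) (P : Matrix (Fin N) (Fin k) ℝ)
    (Lhat : Matrix (Fin k) (Fin k) ℝ) (Mhat : Matrix (Fin k) (Fin m) ℝ) (s : ℂ) :
    Matrix (Fin N) (Fin m) ℂ :=
  cplx (L * P) * (s • (1 : Matrix (Fin k) (Fin k) ℂ) + cplx Lhat)⁻¹ * cplx Mhat

/-- Squared Frobenius norm `‖M‖_F² = tr(MᵀM)`. -/
def frobSq {α β : Type*} [Fintype α] [Fintype β] (M : Matrix α β ℝ) : ℝ := (Mᵀ * M).trace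

end


open MeasureTheory Complex

/-- The principal value of `∫ F` is `π c`, in the strong sense that `F ω` is the model function
`c / (1 + iω)` up to an integrable function of integral `0`. When `F ω = R (iω)` for a strictly
proper rational function `R` with poles in the open left half-plane, `c` is the limit of `s R(s)`
at infinity. -/
structure HasAxisResidue (F : ℝ → ℂ) (c : ℂ) : Prop where
  integrable : Integrable fun ω : ℝ => F ω - c * (1 + ω * I)⁻¹
  integral_eq_zero : ∫ ω : ℝ, (F ω - c * (1 + ω * I)⁻¹) = 0

namespace HasAxisResidue

variable {F G : ℝ → ℂ} {c d : ℂ}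

theorem zero : HasAxisResidue (fun _ => 0) 0 := by
  constructor <;> simp

theorem add (hF : HasAxisResidue F c) (hG : HasAxisResidue G d) :
    HasAxisResidue (fun ω => F ω + G ω) (c + d) := by
  constructor <;> simp only [add_mul, add_sub_add_comm]
  · exact hF.integrable.add hG.integrable
  · rw [integral_add hF.integrable hG.integrable, hF.integral_eq_zero, hG.integral_eq_zero,
      add_zero]

theorem mul_const (hF : HasAxisResidue F c) (a : ℂ) :
    HasAxisResidue (fun ω => F ω * a) (c * a) := by
  constructor <;> simp only [mul_right_comm c a, ← sub_mul]
  · exact hF.integrable.mul_const a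
  · rw [integral_mul_const, hF.integral_eq_zero, zero_mul]

theorem sum {ι : Type*} (s : Finset ι) {F : ι → ℝ → ℂ} {c : ι → ℂ}
    (h : ∀ i ∈ s, HasAxisResidue (F i) (c i)) :
    HasAxisResidue (fun ω => ∑ i ∈ s, F i ω) (∑ i ∈ s, c i) := by
  classical
  induction s using Finset.induction_on with
  | empty => simpa using zero
  | insert a s ha ih =>
    simp only [Finset.sum_insert ha]
    exact (h a (by simp)).add (ih fun i hi => h i (by simp [hi]))

theorem congr_ae (hF : HasAxisResidue F c) (h : F =ᵐ[volume] G) : HasAxisResidue G c := by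
  have hFG : (fun ω : ℝ => F ω - c * (1 + ω * I)⁻¹) =ᵐ[volume]
      fun ω : ℝ => G ω - c * (1 + ω * I)⁻¹ := h.sub .rfl
  exact ⟨hF.integrable.congr hFG, integral_congr_ae hFG ▸ hF.integral_eq_zero⟩

theorem inv_one_add_mul_I_add_inv (ω : ℝ) :
    (1 + ω * I)⁻¹ + (1 + (-ω : ℝ) * I)⁻¹ = 2 * ((1 + ω ^ 2)⁻¹ : ℝ) := by
  have h₁ : 1 + ω * I ≠ 0 := fun h => by simpa using congrArg re h
  have h₂ : 1 + (-ω : ℝ) * I ≠ 0 := fun h => by simpa using congrArg re h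
  have hmul : (1 + ω * I) * (1 + (-ω : ℝ) * I) = ((1 + ω ^ 2 : ℝ) : ℂ) := by
    push_cast
    linear_combination -(ω : ℂ) ^ 2 * I_sq
  rw [inv_add_inv h₁ h₂, hmul, ofReal_inv, div_eq_mul_inv]
  push_cast
  ring

theorem add_comp_neg_eq (F G : ℝ → ℂ) (c : ℂ) :
    (fun ω => F ω + G (-ω)) = fun ω : ℝ =>
      ((F ω - c * (1 + ω * I)⁻¹) + (G (-ω) - c * (1 + (-ω : ℝ) * I)⁻¹)) +
        c * (2 * ((1 + ω ^ 2)⁻¹ : ℝ)) := by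
  ext ω
  rw [← inv_one_add_mul_I_add_inv]
  ring

theorem integrable_model (c : ℂ) : Integrable fun ω : ℝ => c * (2 * ((1 + ω ^ 2)⁻¹ : ℝ)) :=
  (integrable_inv_one_add_sq.ofReal.const_mul 2).const_mul c

theorem integrable_add_comp_neg (hF : HasAxisResidue F c) (hG : HasAxisResidue G c) :
    Integrable fun ω => F ω + G (-ω) := by
  rw [add_comp_neg_eq F G c]
  exact (hF.integrable.add hG.integrable.comp_neg).add (integrable_model c)

theorem integral_add_comp_neg (hF : HasAxisResidue F c) (hG : HasAxisResidue G c) :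
    ∫ ω, (F ω + G (-ω)) = 2 * Real.pi * c := by
  have hFG : Integrable fun ω : ℝ =>
      (F ω - c * (1 + ω * I)⁻¹) + (G (-ω) - c * (1 + (-ω : ℝ) * I)⁻¹) :=
    hF.integrable.add hG.integrable.comp_neg
  rw [add_comp_neg_eq F G c, integral_add hFG (integrable_model c),
    integral_add hF.integrable hG.integrable.comp_neg,
    integral_neg_eq_self fun ω : ℝ => G ω - c * (1 + ω * I)⁻¹, hF.integral_eq_zero,
    hG.integral_eq_zero, integral_const_mul, integral_const_mul, integral_complex_ofReal,
    integral_univ_inv_one_add_sq]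
  ring

end HasAxisResidue

section SimpleFractions

variable {l l' : ℂ}

theorem axis_sub_ne_zero (hl : l.re < 0) (ω : ℝ) : (ω : ℂ) * I - l ≠ 0 := fun h =>
  hl.ne (by simpa using congrArg re h)

theorem continuous_inv_axis_sub (hl : l.re < 0) : Continuous fun ω : ℝ => ((ω : ℂ) * I - l)⁻¹ :=
  Continuous.inv₀ (by fun_prop) (axis_sub_ne_zero hl)

theorem memLp_two_inv_axis_sub (hl : l.re < 0) :
    MemLp (fun ω : ℝ => ((ω : ℂ) * I - l)⁻¹) 2 := by
  rw [memLp_two_iff_integrable_sq_norm (continuous_inv_axis_sub hl).aestronglyMeasurable]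
  have hint := (integrable_inv_one_add_sq.comp_div hl.ne).comp_sub_right l.im
  refine (hint.const_mul (l.re ^ 2)⁻¹).congr (.of_forall fun ω => ?_)
  have hnorm : ‖(ω : ℂ) * I - l‖ ^ 2 = l.re ^ 2 + (ω - l.im) ^ 2 := by
    rw [← normSq_eq_norm_sq, normSq_apply]
    simp
    ring
  have := hl.ne
  simp only [norm_inv, inv_pow, hnorm, ← mul_inv]
  congr 1
  field_simp

theorem norm_inv_axis_sub_le (hl : l.re < 0) (ω : ℝ) : ‖((ω : ℂ) * I - l)⁻¹‖ ≤ (-l.re)⁻¹ := by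
  rw [norm_inv]
  gcongr
  · linarith
  · simpa using re_le_norm ((ω : ℂ) * I - l)

theorem integrable_inv_axis_sub_pow (hl : l.re < 0) (k : ℕ) :
    Integrable fun ω : ℝ => (((ω : ℂ) * I - l) ^ (k + 2))⁻¹ := by
  induction k with
  | zero =>
    simp only [zero_add, pow_two, mul_inv]
    exact (memLp_two_inv_axis_sub hl).integrable_mul (memLp_two_inv_axis_sub hl)
  | succ k ih =>
    simp only [pow_succ _ (k + 2), mul_inv, add_right_comm k 1 2]
    exact ih.mul_bdd (c := (-l.re)⁻¹) (continuous_inv_axis_sub hl).aestronglyMeasurable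
      (.of_forall (norm_inv_axis_sub_le hl))

theorem tendsto_inv_axis_sub_cocompact (l : ℂ) :
    Tendsto (fun ω : ℝ => ((ω : ℂ) * I - l)⁻¹) (cocompact ℝ) (𝓝 0) := by
  refine tendsto_inv₀_cobounded.comp ?_
  rw [← tendsto_norm_atTop_iff_cobounded]
  refine tendsto_atTop_mono (fun ω => ?_)
    (tendsto_atTop_add_const_right _ (-‖l‖) (tendsto_norm_cocompact_atTop (E := ℝ)))
  simpa [sub_eq_add_neg] using norm_sub_norm_le ((ω : ℂ) * I) l

theorem hasDerivAt_axis_sub (l : ℂ) (ω : ℝ) :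
    HasDerivAt (fun ω : ℝ => (ω : ℂ) * I - l) I ω := by
  simpa using ((ofRealCLM.hasDerivAt (x := ω)).mul_const I).sub_const l

theorem integral_eq_zero_of_hasDerivAt_of_tendsto_cocompact {E : Type*} [NormedAddCommGroup E]
    [NormedSpace ℝ E] [CompleteSpace E] {f f' : ℝ → E} {a : E} (hf : ∀ x, HasDerivAt f (f' x) x)
    (hf' : Integrable f') (ha : Tendsto f (cocompact ℝ) (𝓝 a)) : ∫ x, f' x = 0 := by
  rw [integral_of_hasDerivAt_of_tendsto hf hf' (ha.mono_left atBot_le_cocompact)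
    (ha.mono_left atTop_le_cocompact), sub_self]

theorem integral_inv_axis_sub_pow (hl : l.re < 0) (k : ℕ) :
    ∫ ω : ℝ, (((ω : ℂ) * I - l) ^ (k + 2))⁻¹ = 0 := by
  refine integral_eq_zero_of_hasDerivAt_of_tendsto_cocompact
    (f := fun ω : ℝ => I * ((k : ℂ) + 1)⁻¹ * (((ω : ℂ) * I - l)⁻¹) ^ (k + 1)) (fun ω => ?_)
    (integrable_inv_axis_sub_pow hl k) (((tendsto_inv_axis_sub_cocompact l).pow _).const_mul _)
  have hne := axis_sub_ne_zero hl ω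
  have hk : (k : ℂ) + 1 ≠ 0 := by exact_mod_cast k.succ_ne_zero
  refine ((((hasDerivAt_axis_sub l ω).fun_inv hne).fun_pow (k + 1)).const_mul
    (I * ((k : ℂ) + 1)⁻¹)).congr_deriv ?_
  generalize (ω : ℂ) * I - l = z at hne
  simp only [Nat.add_sub_cancel, inv_pow]
  push_cast
  field_simp
  rw [I_sq]
  ring

theorem div_mem_slitPlane_of_re_pos {z w : ℂ} (hz : 0 < z.re) (hw : 0 < w.re) :
    z / w ∈ slitPlane := by
  have hw₀ : w ≠ 0 := fun h => hw.ne' (by simp [h])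
  rw [mem_slitPlane_iff_not_le_zero]
  intro hle
  obtain ⟨hre, him⟩ := Complex.le_def.mp hle
  have hz_re : z.re = (z / w).re * w.re := by
    conv_lhs => rw [← div_mul_cancel₀ z hw₀]
    simp only [mul_re, him, zero_im, zero_mul, sub_zero]
  have : (z / w).re * w.re ≤ 0 := mul_nonpos_of_nonpos_of_nonneg hre hw.le
  linarith

theorem inv_axis_sub_sub_inv_axis_sub (hl : l.re < 0) (hl' : l'.re < 0) (ω : ℝ) :
    ((ω : ℂ) * I - l)⁻¹ - ((ω : ℂ) * I - l')⁻¹ =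
      (l - l') * (((ω : ℂ) * I - l)⁻¹ * ((ω : ℂ) * I - l')⁻¹) := by
  rw [inv_sub_inv (axis_sub_ne_zero hl ω) (axis_sub_ne_zero hl' ω), div_eq_mul_inv, mul_inv]
  ring

theorem integrable_inv_axis_sub_sub (hl : l.re < 0) (hl' : l'.re < 0) :
    Integrable fun ω : ℝ => ((ω : ℂ) * I - l)⁻¹ - ((ω : ℂ) * I - l')⁻¹ := by
  simp only [inv_axis_sub_sub_inv_axis_sub hl hl']
  exact ((memLp_two_inv_axis_sub hl).integrable_mul (memLp_two_inv_axis_sub hl')).const_mul _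

theorem tendsto_axis_sub_div_axis_sub (hl' : l'.re < 0) :
    Tendsto (fun ω : ℝ => ((ω : ℂ) * I - l) / ((ω : ℂ) * I - l')) (cocompact ℝ) (𝓝 1) := by
  have h := ((tendsto_inv_axis_sub_cocompact l').const_mul (l' - l)).const_add 1
  rw [mul_zero, add_zero] at h
  refine h.congr fun ω => ?_
  have := axis_sub_ne_zero hl' ω
  field_simp
  ring

theorem integral_inv_axis_sub_sub (hl : l.re < 0) (hl' : l'.re < 0) :
    ∫ ω : ℝ, (((ω : ℂ) * I - l)⁻¹ - ((ω : ℂ) * I - l')⁻¹) = 0 := by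
  -- A single logarithm of the quotient, which stays in the slit plane, has the same limit at `±∞`.
  refine integral_eq_zero_of_hasDerivAt_of_tendsto_cocompact
    (f := fun ω : ℝ => -I * log (((ω : ℂ) * I - l) / ((ω : ℂ) * I - l'))) (fun ω => ?_)
    (integrable_inv_axis_sub_sub hl hl')
    (((tendsto_axis_sub_div_axis_sub hl').clog one_mem_slitPlane).const_mul _)
  have hne := axis_sub_ne_zero hl ω
  have hne' := axis_sub_ne_zero hl' ω
  have hslit : ((ω : ℂ) * I - l) / ((ω : ℂ) * I - l') ∈ slitPlane :=
    div_mem_slitPlane_of_re_pos (by simpa using hl) (by simpa using hl')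
  refine ((((hasDerivAt_axis_sub l ω).fun_div (hasDerivAt_axis_sub l' ω) hne').clog_real
    hslit).const_mul (-I)).congr_deriv ?_
  generalize (ω : ℂ) * I - l = z at hne
  generalize (ω : ℂ) * I - l' = w at hne'
  field_simp
  linear_combination (z - w) * I_sq

theorem hasAxisResidue_inv_axis_sub_pow (hl : l.re < 0) (k : ℕ) :
    HasAxisResidue (fun ω : ℝ => (((ω : ℂ) * I - l) ^ (k + 1))⁻¹) (if k = 0 then 1 else 0) := by
  cases k with
  | zero =>
    have hmodel (ω : ℝ) : 1 + (ω : ℂ) * I = (ω : ℂ) * I - (-1) := by ring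
    have hneg : (-1 : ℂ).re < 0 := by simp
    constructor <;> simp only [zero_add, pow_one, if_true, one_mul, hmodel]
    · exact integrable_inv_axis_sub_sub hl hneg
    · exact integral_inv_axis_sub_sub hl hneg
  | succ k =>
    constructor <;> simp only [k.succ_ne_zero, if_false, zero_mul, sub_zero]
    · exact integrable_inv_axis_sub_pow hl k
    · exact integral_inv_axis_sub_pow hl k

end SimpleFractions

theorem ae_axis_notMem_of_countable {s : Set ℂ} (hs : s.Countable) :
    ∀ᵐ ω : ℝ, (ω : ℂ) * I ∉ s :=
  measure_eq_zero_iff_ae_notMem.mp <| Set.Countable.measure_zero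
    (hs.preimage_of_injOn fun _ _ _ _ h => by simpa using h) volume

theorem map_resolvent {R S T : Type*} [CommRing R] [Ring S] [Ring T] [Algebra R S] [Algebra R T]
    (e : S ≃ₐ[R] T) (a : S) (r : R) : e (resolvent a r) = resolvent (e a) r := by
  by_cases h : r ∈ spectrum R a
  · rw [spectrum.resolvent_zero_of_mem_spectrum h, map_zero,
      spectrum.resolvent_zero_of_mem_spectrum (by rwa [AlgEquiv.spectrum_eq])]
  · rw [spectrum.notMem_iff] at h
    have h' : IsUnit (algebraMap R T r - e a) := by simpa using h.map e
    rw [resolvent, resolvent, ← mul_one (Ring.inverse (algebraMap R T r - e a)), eq_comm,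
      Ring.inverse_mul_eq_iff_eq_mul _ _ _ h', ← e.commutes, ← map_sub, ← map_mul,
      Ring.mul_inverse_cancel _ h, map_one]

theorem resolvent_apply_eq_sum {K V : Type*} [Field K] [AddCommGroup V] [Module K V]
    (f : Module.End K V) {s l : K} (hs : s ∉ spectrum K f) (hsl : s ≠ l) {k : ℕ} {v : V}
    (hv : ((f - l • 1) ^ k) v = 0) :
    resolvent f s v = ∑ i ∈ Finset.range k, ((s - l) ^ (i + 1))⁻¹ • ((f - l • 1) ^ i) v := by
  have hsl' : s - l ≠ 0 := sub_ne_zero.mpr hsl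
  have hsub : algebraMap K (Module.End K V) s - f = (s - l) • 1 - (f - l • 1) := by
    rw [Algebra.algebraMap_eq_smul_one, sub_smul]
    abel
  have htelescope (i : ℕ) : (algebraMap K (Module.End K V) s - f)
      (((s - l) ^ (i + 1))⁻¹ • ((f - l • 1) ^ i) v) =
        ((s - l) ^ i)⁻¹ • ((f - l • 1) ^ i) v -
          ((s - l) ^ (i + 1))⁻¹ • ((f - l • 1) ^ (i + 1)) v := by
    rw [hsub, map_smul, LinearMap.sub_apply, LinearMap.smul_apply, Module.End.one_apply, smul_sub,
      smul_smul, ← Module.End.mul_apply, ← pow_succ', pow_succ, mul_inv, inv_mul_cancel_right₀ hsl']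
  have hsum : (algebraMap K (Module.End K V) s - f)
      (∑ i ∈ Finset.range k, ((s - l) ^ (i + 1))⁻¹ • ((f - l • 1) ^ i) v) = v := by
    rw [map_sum, Finset.sum_congr rfl fun i _ => htelescope i, Finset.sum_range_sub', hv]
    simp
  conv_lhs => rw [← hsum]
  rw [← Module.End.mul_apply, resolvent, Ring.inverse_mul_cancel _ (spectrum.notMem_iff.mp hs),
    Module.End.one_apply]

section UnstableSubmodule

variable {V : Type*} [AddCommGroup V] [Module ℂ V]

/-- The generalized unstable subspace `X₊(f)` of an endomorphism `f`; `unstableSubspace` is the case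
where `f` is given by a real matrix. -/
def unstableSubmodule (f : Module.End ℂ V) : Submodule ℂ V :=
  ⨆ μ ∈ {μ : ℂ | 0 ≤ μ.re}, f.maxGenEigenspace μ

theorem maxGenEigenspace_le_unstableSubmodule (f : Module.End ℂ V) {l : ℂ} (hl : 0 ≤ l.re) :
    f.maxGenEigenspace l ≤ unstableSubmodule f :=
  le_iSup₂_of_le l hl le_rfl

variable [FiniteDimensional ℂ V] {f : Module.End ℂ V} {φ : Module.Dual ℂ V}

theorem hasAxisResidue_resolvent_of_mem_maxGenEigenspace
    (hφ : unstableSubmodule f ≤ LinearMap.ker φ) {l : ℂ} {v : V} (hv : v ∈ f.maxGenEigenspace l) :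
    HasAxisResidue (fun ω : ℝ => φ (resolvent f (ω * I) v)) (φ v) := by
  obtain ⟨k, hk⟩ := (Module.End.mem_maxGenEigenspace f l v).mp hv
  have hk' : ((f - l • 1) ^ (k + 1)) v = 0 := by
    rw [pow_succ', Module.End.mul_apply, hk, map_zero]
  have hterm (i : ℕ) : HasAxisResidue
      (fun ω : ℝ => ((ω * I - l) ^ (i + 1))⁻¹ * φ (((f - l • 1) ^ i) v))
      ((if i = 0 then 1 else 0) * φ (((f - l • 1) ^ i) v)) := by
    rcases lt_or_ge l.re 0 with hl | hl
    · exact (hasAxisResidue_inv_axis_sub_pow hl i).mul_const _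
    · have hcomm : Commute f ((f - l • 1) ^ i) :=
        ((Commute.refl f).sub_right ((Commute.one_right f).smul_right l)).pow_right i
      have hmem := Module.End.mapsTo_maxGenEigenspace_of_comm hcomm l hv
      have hzero : φ (((f - l • 1) ^ i) v) = 0 :=
        hφ (maxGenEigenspace_le_unstableSubmodule f hl hmem)
      simpa only [hzero, mul_zero] using HasAxisResidue.zero
  have hsum := HasAxisResidue.sum (Finset.range (k + 1)) fun i _ => hterm i
  simp only [ite_mul, one_mul, zero_mul, Finset.sum_ite_eq', Finset.mem_range, k.succ_pos, if_true,
    pow_zero, Module.End.one_apply] at hsum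
  refine hsum.congr_ae ?_
  filter_upwards [ae_axis_notMem_of_countable
    ((Module.End.finite_spectrum f).insert l).countable] with ω hω
  rw [Set.mem_insert_iff, not_or] at hω
  rw [resolvent_apply_eq_sum f hω.2 hω.1 hk', map_sum]
  simp only [map_smul, smul_eq_mul]

theorem hasAxisResidue_resolvent (hφ : unstableSubmodule f ≤ LinearMap.ker φ) (v : V) :
    HasAxisResidue (fun ω : ℝ => φ (resolvent f (ω * I) v)) (φ v) := by
  have hv : v ∈ ⨆ l, f.maxGenEigenspace l := by
    rw [Module.End.iSup_maxGenEigenspace_eq_top]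
    trivial
  induction hv using Submodule.iSup_induction' with
  | mem l v hv => exact hasAxisResidue_resolvent_of_mem_maxGenEigenspace hφ hv
  | zero => simpa only [map_zero] using HasAxisResidue.zero
  | add v w _ _ hv hw => simpa only [map_add] using hv.add hw

end UnstableSubmodule

section Matrices

theorem ker_toLin'_le_ker_toLin'_mul {R l m n : Type*} [CommSemiring R] [Fintype m] [Fintype n]
    [DecidableEq n] (M : Matrix l m R) (N : Matrix m n R) :
    LinearMap.ker (toLin' N) ≤ LinearMap.ker (toLin' (M * N)) := fun v hv => by
  rw [LinearMap.mem_ker, toLin'_apply] at hv ⊢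
  rw [← mulVec_mulVec, hv, mulVec_zero]

variable {n n₁ n₂ m p : Type*} [Fintype n] [Fintype n₁] [Fintype n₂] [Fintype m] [Fintype p]
  [DecidableEq n] [DecidableEq n₁] [DecidableEq n₂]

theorem resolvent_eq_nonsing_inv {R : Type*} [CommRing R] (A : Matrix n n R) (s : R) :
    resolvent A s = (s • (1 : Matrix n n R) - A)⁻¹ := by
  rw [resolvent, Algebra.algebraMap_eq_smul_one, nonsing_inv_eq_ringInverse]

theorem hasAxisResidue_trace_mul_resolvent_mul {A : Matrix n n ℂ} {W : Matrix m n ℂ}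
    (hW : unstableSubmodule (toLin' A) ≤ LinearMap.ker (toLin' W)) (B : Matrix n m ℂ) :
    HasAxisResidue (fun ω : ℝ => (W * resolvent A (ω * I) * B).trace) (W * B).trace := by
  refine HasAxisResidue.sum Finset.univ fun j _ => ?_
  have hφ : unstableSubmodule (toLin' A) ≤ LinearMap.ker (LinearMap.proj j ∘ₗ toLin' W) :=
    hW.trans (LinearMap.ker_le_ker_comp _ _)
  have hresolvent (s : ℂ) : resolvent (toLin' A) s = toLin' (resolvent A s) :=
    (map_resolvent toLinAlgEquiv' A s).symm
  refine (hasAxisResidue_resolvent hφ (B.col j)).congr_ae (.of_forall fun ω => ?_)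
  simp only [hresolvent, LinearMap.comp_apply, toLin'_apply, mulVec_mulVec]
  rfl

/-- The transfer function `S(s) = C (sI - A)⁻¹ B` of a system given by complex matrices, with value
`0` at the eigenvalues of `A`. -/
noncomputable def transferFunction (A : Matrix n n ℂ) (B : Matrix n m ℂ) (C : Matrix p n ℂ)
    (s : ℂ) : Matrix p m ℂ :=
  C * resolvent A s * B

theorem resolvent_transpose_mul_mul_resolvent {R : Type*} [CommRing R] {A₁ : Matrix n₁ n₁ R}
    {A₂ : Matrix n₂ n₂ R} {Q X : Matrix n₁ n₂ R} (hX : A₁ᵀ * X + X * A₂ + Q = 0) {s : R}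
    (h₁ : -s ∉ spectrum R A₁) (h₂ : s ∉ spectrum R A₂) :
    (resolvent A₁ (-s))ᵀ * Q * resolvent A₂ s =
      X * resolvent A₂ s + (resolvent A₁ (-s))ᵀ * X := by
  have hQ : Q = (algebraMap R _ (-s) - A₁)ᵀ * X + X * (algebraMap R _ s - A₂) := by
    rw [eq_neg_of_add_eq_zero_right hX]
    simp only [Algebra.algebraMap_eq_smul_one, neg_smul, transpose_sub, transpose_neg,
      transpose_smul, transpose_one, Matrix.sub_mul, Matrix.neg_mul, Matrix.smul_mul,
      Matrix.one_mul, Matrix.mul_sub, Matrix.mul_smul, Matrix.mul_one]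
    abel
  have hR₁ : (resolvent A₁ (-s))ᵀ * (algebraMap R _ (-s) - A₁)ᵀ = 1 := by
    rw [← transpose_mul, resolvent, Ring.mul_inverse_cancel _ (spectrum.notMem_iff.mp h₁),
      transpose_one]
  have hR₂ : (algebraMap R _ s - A₂) * resolvent A₂ s = 1 :=
    Ring.mul_inverse_cancel _ (spectrum.notMem_iff.mp h₂)
  rw [hQ, Matrix.mul_add, ← Matrix.mul_assoc, hR₁, Matrix.one_mul, Matrix.add_mul,
    Matrix.mul_assoc, Matrix.mul_assoc, hR₂, Matrix.mul_one, add_comm]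

theorem trace_transferFunction_transpose_mul {A₁ : Matrix n₁ n₁ ℂ} {A₂ : Matrix n₂ n₂ ℂ}
    {C₁ : Matrix p n₁ ℂ} {C₂ : Matrix p n₂ ℂ} {X : Matrix n₁ n₂ ℂ}
    (hX : A₁ᵀ * X + X * A₂ + C₁ᵀ * C₂ = 0) (B₁ : Matrix n₁ m ℂ) (B₂ : Matrix n₂ m ℂ) {s : ℂ}
    (h₁ : -s ∉ spectrum ℂ A₁) (h₂ : s ∉ spectrum ℂ A₂) :
    ((transferFunction A₁ B₁ C₁ (-s))ᵀ * transferFunction A₂ B₂ C₂ s).trace =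
      (B₁ᵀ * X * resolvent A₂ s * B₂).trace + (B₂ᵀ * Xᵀ * resolvent A₁ (-s) * B₁).trace :=
  calc
    _ = (B₁ᵀ * ((resolvent A₁ (-s))ᵀ * (C₁ᵀ * C₂) * resolvent A₂ s) * B₂).trace := by
      simp only [transferFunction, transpose_mul, Matrix.mul_assoc]
    _ = (B₁ᵀ * X * resolvent A₂ s * B₂).trace +
        (B₂ᵀ * Xᵀ * resolvent A₁ (-s) * B₁)ᵀ.trace := by
      rw [resolvent_transpose_mul_mul_resolvent hX h₁ h₂]
      simp only [Matrix.mul_add, Matrix.add_mul, trace_add, transpose_mul, transpose_transpose,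
        Matrix.mul_assoc]
    _ = _ := by rw [trace_transpose]

theorem trace_transferFunction_ae_eq {A₁ : Matrix n₁ n₁ ℂ} {A₂ : Matrix n₂ n₂ ℂ}
    {C₁ : Matrix p n₁ ℂ} {C₂ : Matrix p n₂ ℂ} {X : Matrix n₁ n₂ ℂ}
    (hX : A₁ᵀ * X + X * A₂ + C₁ᵀ * C₂ = 0) (B₁ : Matrix n₁ m ℂ) (B₂ : Matrix n₂ m ℂ) :
    (fun ω : ℝ => ((transferFunction A₁ B₁ C₁ (-(ω * I)))ᵀ *
      transferFunction A₂ B₂ C₂ (ω * I)).trace) =ᵐ[volume] fun ω : ℝ =>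
        (B₁ᵀ * X * resolvent A₂ (ω * I) * B₂).trace +
          (B₂ᵀ * Xᵀ * resolvent A₁ ((-ω : ℝ) * I) * B₁).trace := by
  have h₁ := (Measure.measurePreserving_neg (volume : Measure ℝ)).quasiMeasurePreserving.ae
    (ae_axis_notMem_of_countable (Matrix.finite_spectrum A₁).countable)
  filter_upwards [h₁, ae_axis_notMem_of_countable (Matrix.finite_spectrum A₂).countable]
    with ω h₁ h₂
  rw [ofReal_neg, neg_mul] at h₁ ⊢
  exact trace_transferFunction_transpose_mul hX B₁ B₂ h₁ h₂

theorem stmt1_general {A₁ : Matrix n₁ n₁ ℂ} {A₂ : Matrix n₂ n₂ ℂ} (B₁ : Matrix n₁ m ℂ)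
    (B₂ : Matrix n₂ m ℂ) {C₁ : Matrix p n₁ ℂ} {C₂ : Matrix p n₂ ℂ} {X : Matrix n₁ n₂ ℂ}
    (hX : A₁ᵀ * X + X * A₂ + C₁ᵀ * C₂ = 0)
    (h₁ : unstableSubmodule (toLin' A₁) ≤ LinearMap.ker (toLin' Xᵀ))
    (h₂ : unstableSubmodule (toLin' A₂) ≤ LinearMap.ker (toLin' X)) :
    let f : ℝ → ℂ := fun ω => ((transferFunction A₁ B₁ C₁ (-(ω * I)))ᵀ *
      transferFunction A₂ B₂ C₂ (ω * I)).trace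
    Integrable f ∧ ∫ ω, f ω = 2 * Real.pi * (B₁ᵀ * X * B₂).trace := by
  have hF := hasAxisResidue_trace_mul_resolvent_mul
    (h₂.trans (ker_toLin'_le_ker_toLin'_mul B₁ᵀ X)) B₂
  have hG := hasAxisResidue_trace_mul_resolvent_mul
    (h₁.trans (ker_toLin'_le_ker_toLin'_mul B₂ᵀ Xᵀ)) B₁
  have htrace : (B₂ᵀ * Xᵀ * B₁).trace = (B₁ᵀ * X * B₂).trace := by
    rw [← trace_transpose]
    simp only [transpose_mul, transpose_transpose, Matrix.mul_assoc]
  rw [htrace] at hG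
  have hae := trace_transferFunction_ae_eq hX B₁ B₂
  exact ⟨(hF.integrable_add_comp_neg hG).congr hae.symm,
    (integral_congr_ae hae).trans (hF.integral_add_comp_neg hG)⟩

end Matrices

theorem H2normSq_eq_of_integral_eq {α β : Type*} [Fintype α] [Fintype β] {S : ℂ → Matrix α β ℂ}
    {r : ℝ} (hS : Integrable (fun ω : ℝ => ((S (-(ω * I)))ᵀ * S (ω * I)).trace) ∧
      ∫ ω : ℝ, ((S (-(ω * I)))ᵀ * S (ω * I)).trace = 2 * Real.pi * r) :
    H2normSq S = r := by
  have hre : ∫ ω : ℝ, ((S (-(ω * I)))ᵀ * S (ω * I)).trace.re = 2 * Real.pi * r := by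
    refine (reCLM.integral_comp_comm hS.1).trans ?_
    rw [hS.2, reCLM_apply]
    exact_mod_cast ofReal_re (2 * Real.pi * r)
  rw [H2normSq, hre, one_div, inv_mul_cancel_left₀ Real.two_pi_pos.ne']

section Complexification

variable {α β γ : Type*}

theorem cplx_add (M N : Matrix α β ℝ) : cplx (M + N) = cplx M + cplx N :=
  Matrix.map_add _ ofReal_add M N

theorem cplx_mul [Fintype β] (M : Matrix α β ℝ) (N : Matrix β γ ℝ) :
    cplx (M * N) = cplx M * cplx N :=
  Matrix.map_mul (f := ofRealHom)

theorem cplx_transpose (M : Matrix α β ℝ) : cplx Mᵀ = (cplx M)ᵀ := rfl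

theorem trace_cplx [Fintype α] (M : Matrix α α ℝ) : (cplx M).trace = M.trace :=
  (AddMonoidHom.map_trace ofRealHom M).symm

theorem cplx_lyapunov [Fintype α] [Fintype β] {A X : Matrix α α ℝ} {C : Matrix β α ℝ}
    (hX : Aᵀ * X + X * A + Cᵀ * C = 0) :
    (cplx A)ᵀ * cplx X + cplx X * cplx A + (cplx C)ᵀ * cplx C = 0 := by
  simp only [← cplx_transpose, ← cplx_mul, ← cplx_add, hX]
  exact Matrix.map_zero _ ofReal_zero

theorem transfer_eq_transferFunction {n m p : ℕ} (A : Matrix (Fin n) (Fin n) ℝ)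
    (B : Matrix (Fin n) (Fin m) ℝ) (C : Matrix (Fin p) (Fin n) ℝ) :
    transfer A B C = transferFunction (cplx A) (cplx B) (cplx C) := by
  ext1 s
  rw [transfer, transferFunction, resolvent_eq_nonsing_inv]

end Complexification

/-- the H₂-norm of `S(s) = C(sI − A)⁻¹B` equals `tr(BᵀXB)` for the
distinguished PSD solution `X` of the Lyapunov equation. -/
theorem stmt1 {n m p : ℕ} (A : Matrix (Fin n) (Fin n) ℝ) (B : Matrix (Fin n) (Fin m) ℝ)
    (C : Matrix (Fin p) (Fin n) ℝ)
    (hC : unstableSubspace A ≤ LinearMap.ker (Matrix.toLin' (cplx C)))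
    (X : Matrix (Fin n) (Fin n) ℝ) (hXsymm : X.IsSymm) (hXpsd : X.PosSemidef)
    (hLyap : Aᵀ * X + X * A + Cᵀ * C = 0)
    (hXker : unstableSubspace A ≤ LinearMap.ker (Matrix.toLin' (cplx X))) :
    H2normSq (transfer A B C) = (Bᵀ * X * B).trace := by
  have hker : unstableSubspace A ≤ LinearMap.ker (toLin' (cplx X)ᵀ) := by
    rwa [← cplx_transpose, hXsymm.eq]
  rw [transfer_eq_transferFunction]
  refine H2normSq_eq_of_integral_eq ?_
  simpa only [← cplx_transpose, ← cplx_mul, trace_cplx] using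
    stmt1_general (cplx B) (cplx B) (cplx_lyapunov hLyap) hker hXker
end

section
/- Let L ∈ ℝ^{N×N} be the Laplacian of a connected weighted undirected graph (L symmetric, positive semidefinite, L𝟙_N = 0, with 0 a simple eigenvalue), and let M ∈ ℝ^{N×m} have columns e_{v₁},…,e_{v_m} for distinct leader nodes v₁,…,v_m. Let π = {C₁,…,C_k} be an almost equitable partition with characteristic matrix P (L(Im P) ⊆ Im P), L̂ = (PᵀP)⁻¹PᵀLP, M̂ = (PᵀP)⁻¹PᵀM, and let C_{k_i} denote the cell containing v_i. Define S(s) = L(sI + L)⁻¹M and Ŝ(s) = LP(sI + L̂)⁻¹M̂. Then sup_{ω∈ℝ} σ_max(S(iω) − Ŝ(iω))² equals max_{1≤i≤m}(1 − 1/|C_{k_i}|) if all leaders lie in distinct cells, and equals 1 if at least two leaders lie in the same cell. -/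
open Matrix Filter Topology Function
open scoped Kronecker

/-!
Write `Π = P (PᵀP)⁻¹ Pᵀ` for the orthogonal projection onto `Im P`. As `Im P` is `L`-invariant, the
resolvent of `L` intertwines with that of `L̂` along `P`, so the error system is
`S(s) - Ŝ(s) = L (sI + L)⁻¹ (I - Π) M`. On the imaginary axis `L (sI + L)⁻¹` is a contraction, being
the average of `I` and a Cayley transform, and as `ω → 0` it tends to the identity on `Im L`, which
contains the columns of `(I - Π) M` because `ker L ⊆ Im P`. Hence the H∞-norm is `‖(I - Π) M‖`,
whose square is the norm of the submatrix of `I - Π` indexed by the leaders. That submatrix is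
diagonal when the leaders lie in distinct cells; otherwise it has norm at most `1` and fixes
`eᵢ - eⱼ` for two leaders `vᵢ`, `vⱼ` of one cell.
-/

open scoped Matrix.Norms.L2Operator

section CStarAlgebra

lemma star_mul_inv_mem_unitary {A : Type*} [Monoid A] [StarMul A] (u : Aˣ)
    (hu : IsStarNormal (u : A)) : star (u : A) * ↑u⁻¹ ∈ unitary A :=
  (Units.mul_inv_mem_unitary (star u) u).mpr <| Units.ext <| by
    simpa using hu.star_comm_self.eq.symm

lemma norm_le_one_of_mem_unitary {A : Type*} [NormedRing A] [StarRing A] [CStarRing A] {u : A}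
    (hu : u ∈ unitary A) : ‖u‖ ≤ 1 :=
  calc ‖u‖ = ‖(1 : A)‖ := by simpa using CStarRing.norm_coe_unitary_mul ⟨u, hu⟩ 1
    _ ≤ 1 := IsStarProjection.norm_le 1 (.one A)

variable {A : Type*} [CStarAlgebra A] {a : A}

lemma isUnit_smul_one_add_of_isSelfAdjoint (ha : IsSelfAdjoint a) {z : ℂ} (hz : z.im ≠ 0) :
    IsUnit (z • (1 : A) + a) := by
  have hspec : -z ∉ spectrum ℂ a := fun h => hz (by simpa using ha.im_eq_zero_of_mem_spectrum h)
  rw [spectrum.notMem_iff, Algebra.algebraMap_eq_smul_one] at hspec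
  convert hspec.neg using 1
  module

-- With `u = iω + a`, twice `a u⁻¹` is `1` plus the Cayley transform `u⋆ u⁻¹`, which is unitary.
lemma norm_mul_inverse_le_one (ha : IsSelfAdjoint a) (ω : ℝ) :
    ‖a * Ring.inverse (((ω : ℂ) * Complex.I) • (1 : A) + a)‖ ≤ 1 := by
  by_cases h : IsUnit (((ω : ℂ) * Complex.I) • (1 : A) + a)
  · obtain ⟨u, hu⟩ := h
    have hstar : star (u : A) = a - ((ω : ℂ) * Complex.I) • (1 : A) := by
      rw [hu, star_add, star_smul, star_one, ha.star_eq]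
      simp [sub_eq_neg_add]
    have hnormal : IsStarNormal (u : A) := ⟨by
      have hcomm : Commute a (((ω : ℂ) * Complex.I) • (1 : A)) :=
        (Commute.one_right a).smul_right _
      rw [hstar, hu]
      exact (hcomm.add_right rfl).sub_left (.add_right rfl hcomm.symm)⟩
    have hcayley : a * ↑u⁻¹ = (2⁻¹ : ℂ) • (1 + star (u : A) * ↑u⁻¹) := by
      have hsum : a = (2⁻¹ : ℂ) • (u + star (u : A)) := by rw [hstar, hu]; module
      nth_rw 1 [hsum]
      rw [smul_mul_assoc, add_mul, Units.mul_inv]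
    rw [← hu, Ring.inverse_unit, hcayley, norm_smul]
    have hone : ‖(1 : A)‖ ≤ 1 := norm_le_one_of_mem_unitary (one_mem _)
    have hU := norm_le_one_of_mem_unitary (star_mul_inv_mem_unitary u hnormal)
    have hadd := norm_add_le (1 : A) (star (u : A) * ↑u⁻¹)
    norm_num
    linarith
  · simp [Ring.inverse_non_unit _ h]

end CStarAlgebra

section HinfNorm

variable {ι κ : Type*} [Fintype ι]

lemma sigmaMax_eq_norm [Fintype κ] [DecidableEq κ] (X : Matrix ι κ ℂ) : sigmaMax X = ‖X‖ := rfl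

variable [DecidableEq ι] {A : Matrix ι ι ℂ}

lemma mul_inv_smul_one_add_mul {z : ℂ} (h : IsUnit (z • (1 : Matrix ι ι ℂ) + A))
    (W : Matrix ι κ ℂ) :
    A * (z • (1 : Matrix ι ι ℂ) + A)⁻¹ * (A * W) =
      A * W - z • (A * (z • (1 : Matrix ι ι ℂ) + A)⁻¹ * W) := by
  have hdet := (isUnit_iff_isUnit_det _).mp h
  set B := z • (1 : Matrix ι ι ℂ) + A with hB
  have hA : A = B - z • (1 : Matrix ι ι ℂ) := by rw [hB]; abel
  calc A * B⁻¹ * (A * W) = A * (B⁻¹ * A) * W := by simp only [Matrix.mul_assoc]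
    _ = A * (1 - z • B⁻¹) * W := by
      nth_rw 2 [hA]
      rw [Matrix.mul_sub, nonsing_inv_mul _ hdet, Matrix.mul_smul, Matrix.mul_one]
    _ = A * W - z • (A * B⁻¹ * W) := by
      rw [Matrix.mul_sub, Matrix.sub_mul, Matrix.mul_one, Matrix.mul_smul, Matrix.smul_mul]

variable [Fintype κ] [DecidableEq κ]

lemma norm_mul_inv_mul_le (hA : A.IsHermitian) (ω : ℝ) (Z : Matrix ι κ ℂ) :
    ‖A * (((ω : ℂ) * Complex.I) • (1 : Matrix ι ι ℂ) + A)⁻¹ * Z‖ ≤ ‖Z‖ := by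
  rw [nonsing_inv_eq_ringInverse]
  exact (l2_opNorm_mul _ _).trans
    (mul_le_of_le_one_left (norm_nonneg _) (norm_mul_inverse_le_one hA ω))

lemma norm_sub_mul_inv_mul_le (hA : A.IsHermitian) (W : Matrix ι κ ℂ) {ω : ℝ} (hω : ω ≠ 0) :
    ‖A * W - A * (((ω : ℂ) * Complex.I) • (1 : Matrix ι ι ℂ) + A)⁻¹ * (A * W)‖ ≤ |ω| * ‖W‖ := by
  have hunit := isUnit_smul_one_add_of_isSelfAdjoint (z := (ω : ℂ) * Complex.I) hA (by simpa)
  rw [mul_inv_smul_one_add_mul hunit, sub_sub_cancel, norm_smul]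
  simpa using mul_le_mul_of_nonneg_left (norm_mul_inv_mul_le hA ω W) (abs_nonneg ω)

theorem hinfNorm_mul_inv_mul (hA : A.IsHermitian) (W : Matrix ι κ ℂ) :
    HinfNorm (fun s => A * (s • (1 : Matrix ι ι ℂ) + A)⁻¹ * (A * W)) = ‖A * W‖ := by
  have hle := fun ω => norm_mul_inv_mul_le hA ω (A * W)
  simp only [HinfNorm, sigmaMax_eq_norm]
  refine le_antisymm (ciSup_le hle) ?_
  have hlim : Tendsto (fun ω : ℝ => ‖A * W‖ - |ω| * ‖W‖) (𝓝[≠] 0) (𝓝 ‖A * W‖) :=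
    (Continuous.tendsto' (by fun_prop) _ _ (by simp)).mono_left nhdsWithin_le_nhds
  refine le_of_tendsto hlim ?_
  filter_upwards [self_mem_nhdsWithin] with ω (hω : ω ≠ 0)
  have hsup := le_ciSup ⟨_, Set.forall_mem_range.mpr hle⟩ ω
  have htri := (norm_sub_norm_le _ _).trans (norm_sub_mul_inv_mul_le hA W hω)
  linarith

end HinfNorm

section Intertwining

variable {R ι κ : Type*} [CommRing R] [Fintype ι] [DecidableEq ι] [Fintype κ] [DecidableEq κ]
  {A : Matrix ι ι R} {B : Matrix κ κ R} {P : Matrix ι κ R} {Q : Matrix κ ι R}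

lemma isUnit_right_of_intertwines (hQP : Q * P = 1) (hAB : A * P = P * B) (hA : IsUnit A) :
    IsUnit B := by
  refine .of_mul_eq_one_right (Q * A⁻¹ * P) ?_
  calc Q * A⁻¹ * P * B = Q * (A⁻¹ * (A * P)) := by rw [hAB]; simp only [Matrix.mul_assoc]
    _ = 1 := by rw [nonsing_inv_mul_cancel_left _ _ ((isUnit_iff_isUnit_det _).mp hA), hQP]

lemma isUnit_left_of_intertwines {W : Matrix ι ι R} (hQP : Q * P = 1) (hAB : A * P = P * B)
    (hW : 1 - P * Q = W * A) (hB : IsUnit B) : IsUnit A := by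
  -- `W` inverts `A` up to an error in `Im P`; `P * B⁻¹ * Q` removes it, as `A` acts there as `B`.
  refine .of_mul_eq_one_right (W + P * B⁻¹ * Q * (1 - A * W)) ?_
  have hcompl : (1 - A * W) * A = P * B * Q := by
    rw [Matrix.sub_mul, Matrix.mul_assoc, ← hW, Matrix.mul_sub, ← Matrix.mul_assoc A, hAB]
    simp
  calc (W + P * B⁻¹ * Q * (1 - A * W)) * A
      = W * A + P * (B⁻¹ * ((Q * P) * B)) * Q := by
        rw [Matrix.add_mul, Matrix.mul_assoc _ _ A, hcompl]; simp only [Matrix.mul_assoc]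
    _ = 1 := by
      rw [hQP, Matrix.one_mul, nonsing_inv_mul _ ((isUnit_iff_isUnit_det _).mp hB),
        Matrix.mul_one, ← hW, sub_add_cancel]

lemma inv_mul_eq_mul_inv_of_intertwines (hAB : A * P = P * B) (h : IsUnit A ↔ IsUnit B) :
    A⁻¹ * P = P * B⁻¹ := by
  -- When `A` and `B` are singular, both inverses are the junk value `0`.
  simp only [isUnit_iff_isUnit_det] at h
  by_cases hA : IsUnit A.det
  · calc A⁻¹ * P = A⁻¹ * (P * B * B⁻¹) := by rw [mul_nonsing_inv_cancel_right _ _ (h.mp hA)]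
      _ = P * B⁻¹ := by rw [← hAB, Matrix.mul_assoc A, nonsing_inv_mul_cancel_left _ _ hA]
  · rw [nonsing_inv_apply_not_isUnit _ hA, nonsing_inv_apply_not_isUnit _ (mt h.mpr hA),
      Matrix.zero_mul, Matrix.mul_zero]

end Intertwining

section Factorization

variable {ι κ μ : Type*} [Fintype κ]

lemma exists_eq_mul_of_range_le {R : Type*} [CommSemiring R] [Fintype μ]
    {A : Matrix ι κ R} {B : Matrix ι μ R}
    (h : LinearMap.range B.mulVecLin ≤ LinearMap.range A.mulVecLin) :
    ∃ X : Matrix κ μ R, B = A * X := by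
  classical
  have hcol : ∀ j, ∃ x, A *ᵥ x = B.col j := fun j => by
    simpa using h ⟨Pi.single j 1, rfl⟩
  choose x hx using hcol
  exact ⟨of fun i j => x j i, Matrix.ext fun i j => (congrFun (hx j) i).symm⟩

lemma exists_eq_mul_of_ker_le {K : Type*} [Field K] [Fintype ι] {A : Matrix ι κ K}
    {B : Matrix μ κ K} (h : LinearMap.ker A.mulVecLin ≤ LinearMap.ker B.mulVecLin) :
    ∃ W : Matrix μ ι K, B = W * A := by
  classical
  have hrow : ∀ i, LinearMap.proj i ∘ₗ B.mulVecLin ∈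
      Submodule.span K (Set.range fun j => LinearMap.proj j ∘ₗ A.mulVecLin) := fun i =>
    mem_span_of_iInf_ker_le_ker <| by
      rw [← LinearMap.ker_pi]
      exact h.trans (LinearMap.ker_le_ker_comp _ _)
  simp only [Submodule.mem_span_range_iff_exists_fun] at hrow
  choose w hw using hrow
  refine ⟨of w, ext_of_mulVec_single fun l => funext fun i => ?_⟩
  simpa [mul_apply] using (LinearMap.congr_fun (hw i) (Pi.single l 1)).symm

end Factorization

section Resolvent

variable {ι κ μ : Type*} [Fintype ι] [DecidableEq ι] [Fintype κ] [DecidableEq κ]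
  {A W : Matrix ι ι ℂ} {B : Matrix κ κ ℂ} {P : Matrix ι κ ℂ} {Q : Matrix κ ι ℂ}

lemma isUnit_smul_one_add_iff_of_intertwines (hA : A.IsHermitian) (hQP : Q * P = 1)
    (hAB : A * P = P * B) (hW : 1 - P * Q = W * A) (ω : ℝ) :
    IsUnit (((ω : ℂ) * Complex.I) • (1 : Matrix ι ι ℂ) + A) ↔
      IsUnit (((ω : ℂ) * Complex.I) • (1 : Matrix κ κ ℂ) + B) := by
  rcases eq_or_ne ω 0 with rfl | hω
  · simpa using ⟨isUnit_right_of_intertwines hQP hAB, isUnit_left_of_intertwines hQP hAB hW⟩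
  · have hunit := isUnit_smul_one_add_of_isSelfAdjoint (z := (ω : ℂ) * Complex.I) hA (by simpa)
    exact iff_of_true hunit
      (isUnit_right_of_intertwines hQP (by simp [Matrix.add_mul, Matrix.mul_add, hAB]) hunit)

lemma mul_inv_mul_sub_eq_of_intertwines (hA : A.IsHermitian) (hQP : Q * P = 1)
    (hAB : A * P = P * B) (hW : 1 - P * Q = W * A) (M : Matrix ι μ ℂ) (ω : ℝ) :
    A * (((ω : ℂ) * Complex.I) • (1 : Matrix ι ι ℂ) + A)⁻¹ * M -
        A * P * (((ω : ℂ) * Complex.I) • (1 : Matrix κ κ ℂ) + B)⁻¹ * (Q * M) =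
      A * (((ω : ℂ) * Complex.I) • (1 : Matrix ι ι ℂ) + A)⁻¹ * ((1 - P * Q) * M) := by
  have hinv := inv_mul_eq_mul_inv_of_intertwines (P := P)
    (by simp [Matrix.add_mul, Matrix.mul_add, hAB])
    (isUnit_smul_one_add_iff_of_intertwines hA hQP hAB hW ω)
  rw [Matrix.mul_assoc A P, ← hinv]
  simp only [Matrix.sub_mul, Matrix.mul_sub, Matrix.one_mul, Matrix.mul_assoc]

theorem hinfNorm_sub_of_intertwines [Fintype μ] [DecidableEq μ] (hA : A.IsHermitian)
    (hPQ : (P * Q).IsHermitian) (hQP : Q * P = 1) (hAB : A * P = P * B)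
    (hW : 1 - P * Q = W * A) (M : Matrix ι μ ℂ) :
    HinfNorm (fun s => A * (s • (1 : Matrix ι ι ℂ) + A)⁻¹ * M -
      A * P * (s • (1 : Matrix κ κ ℂ) + B)⁻¹ * (Q * M)) = ‖(1 - P * Q) * M‖ := by
  have hW' : (1 - P * Q) * M = A * (Wᴴ * M) := by
    have hmul : A * Wᴴ = (W * A)ᴴ := by rw [conjTranspose_mul, hA.eq]
    rw [← Matrix.mul_assoc, hmul, ← hW, (isHermitian_one.sub hPQ).eq]
  rw [hW', ← hinfNorm_mul_inv_mul hA, ← hW']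
  simp only [HinfNorm, mul_inv_mul_sub_eq_of_intertwines hA hQP hAB hW]

end Resolvent

section Complexification

variable {ι κ μ : Type*}

lemma cplx_one [DecidableEq ι] : cplx (1 : Matrix ι ι ℝ) = 1 := by
  simp [cplx]

lemma cplx_sub (X Y : Matrix ι κ ℝ) : cplx (X - Y) = cplx X - cplx Y :=
  Matrix.map_sub _ Complex.ofReal_sub X Y

lemma cplx_mul_s12 [Fintype κ] (X : Matrix ι κ ℝ) (Y : Matrix κ μ ℝ) :
    cplx (X * Y) = cplx X * cplx Y :=
  Matrix.map_mul (f := Complex.ofRealHom)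

lemma conjTranspose_cplx (X : Matrix ι κ ℝ) : (cplx X)ᴴ = cplx Xᵀ := by
  ext; simp [cplx]

lemma isHermitian_cplx {X : Matrix ι ι ℝ} (hX : X.IsSymm) : (cplx X).IsHermitian := by
  rw [IsHermitian, conjTranspose_cplx, hX.eq]

lemma norm_cplx_le_one_of_isStarProjection [Fintype ι] [DecidableEq ι] {X : Matrix ι ι ℝ}
    (hX : IsStarProjection X) : ‖cplx X‖ ≤ 1 :=
  IsStarProjection.norm_le _
    { isIdempotentElem := by rw [IsIdempotentElem, ← cplx_mul_s12, hX.isIdempotentElem.eq]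
      isSelfAdjoint := isHermitian_cplx <| by
        simpa [star_eq_conjTranspose, IsSymm] using hX.isSelfAdjoint.star_eq }

lemma norm_cplx_diagonal [Fintype ι] [DecidableEq ι] [Nonempty ι] {d : ι → ℝ}
    (hd : ∀ i, 0 ≤ d i) : ‖cplx (diagonal d)‖ = ⨆ i, d i := by
  have hnorm (i : ι) : ‖(d i : ℂ)‖ = d i := by simp [abs_of_nonneg (hd i)]
  rw [cplx, diagonal_map Complex.ofReal_zero, l2_opNorm_diagonal]
  refine le_antisymm ((pi_norm_le_iff_of_nonempty _).mpr fun i => ?_) (ciSup_le fun i => ?_)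
  · exact (hnorm i).trans_le (le_ciSup (Set.finite_range d).bddAbove i)
  · exact (hnorm i).symm.trans_le (norm_le_pi_norm (fun i => (d i : ℂ)) i)

lemma one_le_norm_cplx_of_mulVec_eq_self [Fintype ι] [DecidableEq ι] {X : Matrix ι ι ℝ}
    {x : ι → ℝ} (hx : x ≠ 0) (h : X *ᵥ x = x) : 1 ≤ ‖cplx X‖ := by
  have hfix : cplx X *ᵥ (fun i => (x i : ℂ)) = fun i => (x i : ℂ) := funext fun i => by
    rw [← congrFun h i]
    exact (Complex.ofRealHom.map_mulVec X x i).symm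
  have hpos : 0 < ‖WithLp.toLp 2 fun i => (x i : ℂ)‖ := norm_pos_iff.mpr fun h0 =>
    hx <| funext fun i => by simpa using congr_arg (fun y => y.ofLp i) h0
  have hle := l2_opNorm_mulVec (cplx X) (WithLp.toLp 2 fun i => (x i : ℂ))
  simp only [EuclideanSpace.equiv, hfix] at hle
  exact le_of_mul_le_mul_right (by simpa using hle) hpos

end Complexification

section RangeProjection

variable {ι κ : Type*} [Fintype ι] [Fintype κ] [DecidableEq κ]

/-- The orthogonal projection onto the column space of `P`, for `P` with linearly independent
columns (otherwise `Pᵀ * P` is singular and the inverse takes its junk value `0`). -/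
noncomputable def rangeProj {R : Type*} [CommRing R] (P : Matrix ι κ R) : Matrix ι ι R :=
  P * ((Pᵀ * P)⁻¹ * Pᵀ)

section CommRing

variable {R : Type*} [CommRing R] {P : Matrix ι κ R}

lemma isSymm_rangeProj : (rangeProj P).IsSymm := by
  simp [IsSymm, rangeProj, transpose_mul, transpose_nonsing_inv, Matrix.mul_assoc]

lemma inv_gram_mul_transpose_mul_self (hP : IsUnit (Pᵀ * P)) : (Pᵀ * P)⁻¹ * Pᵀ * P = 1 := by
  rw [Matrix.mul_assoc, nonsing_inv_mul _ ((isUnit_iff_isUnit_det _).mp hP)]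

lemma rangeProj_mul_self (hP : IsUnit (Pᵀ * P)) : rangeProj P * P = P := by
  rw [rangeProj, Matrix.mul_assoc, inv_gram_mul_transpose_mul_self hP, Matrix.mul_one]

lemma mul_eq_mul_of_map_range_le {L : Matrix ι ι R} (hP : IsUnit (Pᵀ * P))
    (hL : Submodule.map L.mulVecLin (LinearMap.range P.mulVecLin) ≤
      LinearMap.range P.mulVecLin) :
    L * P = P * ((Pᵀ * P)⁻¹ * (Pᵀ * L * P)) := by
  rw [← LinearMap.range_comp, ← mulVecLin_mul] at hL
  obtain ⟨X, hX⟩ := exists_eq_mul_of_range_le hL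
  calc L * P = rangeProj P * P * X := by rw [rangeProj_mul_self hP, hX]
    _ = P * ((Pᵀ * P)⁻¹ * (Pᵀ * L * P)) := by
      rw [Matrix.mul_assoc, ← hX]; simp only [rangeProj, Matrix.mul_assoc]

end CommRing

lemma exists_one_sub_rangeProj_eq_mul [DecidableEq ι] {K : Type*} [Field K] {P : Matrix ι κ K}
    {L : Matrix ι ι K} (hP : IsUnit (Pᵀ * P))
    (hker : LinearMap.ker L.mulVecLin ≤ LinearMap.range P.mulVecLin) :
    ∃ W : Matrix ι ι K, 1 - rangeProj P = W * L := by
  refine exists_eq_mul_of_ker_le (hker.trans ?_)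
  rintro _ ⟨y, rfl⟩
  simp [mulVec_mulVec, rangeProj_mul_self hP]

lemma isStarProjection_rangeProj {P : Matrix ι κ ℝ} (hP : IsUnit (Pᵀ * P)) :
    IsStarProjection (rangeProj P) where
  isIdempotentElem := by
    rw [IsIdempotentElem]
    nth_rw 2 [rangeProj]
    rw [← Matrix.mul_assoc, rangeProj_mul_self hP, rangeProj]
  isSelfAdjoint := by
    rw [IsSelfAdjoint, star_eq_conjTranspose, conjTranspose_eq_transpose_of_trivial,
      isSymm_rangeProj.eq]

end RangeProjection

theorem hinfNorm_singleS_sub_singleShat {N k m : ℕ} {L : Matrix (Fin N) (Fin N) ℝ}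
    {P : Matrix (Fin N) (Fin k) ℝ} (hL : L.IsSymm) (hP : IsUnit (Pᵀ * P))
    (hker : LinearMap.ker L.mulVecLin ≤ LinearMap.range P.mulVecLin)
    (hAEP : Submodule.map L.mulVecLin (LinearMap.range P.mulVecLin) ≤
      LinearMap.range P.mulVecLin) (M : Matrix (Fin N) (Fin m) ℝ) :
    HinfNorm (fun s => singleS L M s -
        singleShat L P ((Pᵀ * P)⁻¹ * (Pᵀ * L * P)) ((Pᵀ * P)⁻¹ * (Pᵀ * M)) s) =
      ‖cplx ((1 - rangeProj P) * M)‖ := by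
  obtain ⟨W, hW⟩ := exists_one_sub_rangeProj_eq_mul hP hker
  have hproj : cplx P * cplx ((Pᵀ * P)⁻¹ * Pᵀ) = cplx (rangeProj P) := (cplx_mul_s12 _ _).symm
  have hPQ : (cplx P * cplx ((Pᵀ * P)⁻¹ * Pᵀ)).IsHermitian := by
    rw [hproj]; exact isHermitian_cplx isSymm_rangeProj
  have hQP : cplx ((Pᵀ * P)⁻¹ * Pᵀ) * cplx P = 1 := by
    rw [← cplx_mul_s12, inv_gram_mul_transpose_mul_self hP, cplx_one]
  have hLP : cplx L * cplx P = cplx P * cplx ((Pᵀ * P)⁻¹ * (Pᵀ * L * P)) := by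
    rw [← cplx_mul_s12, ← cplx_mul_s12, mul_eq_mul_of_map_range_le hP hAEP]
  have hWL : 1 - cplx P * cplx ((Pᵀ * P)⁻¹ * Pᵀ) = cplx W * cplx L := by
    rw [hproj, ← cplx_one, ← cplx_sub, hW, cplx_mul_s12]
  have hmain := hinfNorm_sub_of_intertwines (isHermitian_cplx hL) hPQ hQP hLP hWL (cplx M)
  rw [cplx_mul_s12 _ M, cplx_sub, cplx_one, ← hproj, ← hmain]
  simp only [singleS, singleShat, ← Matrix.mul_assoc _ Pᵀ M, cplx_mul_s12 _ M, cplx_mul_s12 L P]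

section LeaderMatrix

variable {ι μ : Type*} [DecidableEq ι]

/-- The input matrix `M = [e_{v₁}, …, e_{vₘ}]` of a network with leaders `v`. -/
noncomputable def leaderMatrix (v : μ → ι) : Matrix ι μ ℝ :=
  of fun i j => if i = v j then 1 else 0

variable [Fintype ι]

lemma transpose_leaderMatrix_mul_mul (v : μ → ι) (X : Matrix ι ι ℝ) :
    (leaderMatrix v)ᵀ * X * leaderMatrix v = X.submatrix v v := by
  ext i j
  simp [leaderMatrix, mul_apply]

variable [Fintype μ] [DecidableEq μ] {X : Matrix ι ι ℝ}

lemma norm_cplx_mul_leaderMatrix_sq (hX : IsStarProjection X) (v : μ → ι) :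
    ‖cplx (X * leaderMatrix v)‖ ^ 2 = ‖cplx (X.submatrix v v)‖ := by
  have hXX : Xᵀ * X = X := by
    rw [← conjTranspose_eq_transpose_of_trivial, ← star_eq_conjTranspose,
      hX.isSelfAdjoint.star_eq, hX.isIdempotentElem.eq]
  rw [sq, ← l2_opNorm_conjTranspose_mul_self, conjTranspose_cplx, ← cplx_mul_s12, transpose_mul,
    Matrix.mul_assoc, ← Matrix.mul_assoc Xᵀ, hXX, ← Matrix.mul_assoc,
    transpose_leaderMatrix_mul_mul]

lemma norm_cplx_leaderMatrix_le_one {v : μ → ι} (hv : Injective v) :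
    ‖cplx (leaderMatrix v)‖ ≤ 1 := by
  have hsq := norm_cplx_mul_leaderMatrix_sq (.one (Matrix ι ι ℝ)) v
  rw [Matrix.one_mul, submatrix_one v hv] at hsq
  exact (sq_le_one_iff₀ (norm_nonneg _)).mp
    (hsq.trans_le (norm_cplx_le_one_of_isStarProjection (.one _)))

lemma norm_cplx_mul_leaderMatrix_le_one (hX : IsStarProjection X) {v : μ → ι}
    (hv : Injective v) : ‖cplx (X * leaderMatrix v)‖ ≤ 1 := by
  rw [cplx_mul_s12]
  exact (l2_opNorm_mul _ _).trans (mul_le_one₀ (norm_cplx_le_one_of_isStarProjection hX)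
    (norm_nonneg _) (norm_cplx_leaderMatrix_le_one hv))

end LeaderMatrix

section Partition

open Finset (univ)

variable {ι κ : Type*} [DecidableEq κ]

/-- The characteristic matrix of the partition of `ι` into the fibres (cells) of `c`. -/
noncomputable def characteristicMatrix (c : ι → κ) : Matrix ι κ ℝ :=
  of fun i j => if c i = j then 1 else 0

lemma span_one_le_range_characteristicMatrix [Fintype κ] (c : ι → κ) :
    Submodule.span ℝ {(fun _ => 1 : ι → ℝ)} ≤ LinearMap.range (characteristicMatrix c).mulVecLin :=
  (Submodule.span_singleton_le_iff_mem _ _).mpr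
    ⟨fun _ => 1, funext fun i => by simp [characteristicMatrix, mulVec, dotProduct]⟩

variable [Fintype ι]

lemma transpose_characteristicMatrix_mul_self (c : ι → κ) :
    (characteristicMatrix c)ᵀ * characteristicMatrix c =
      diagonal fun j => ((univ.filter fun i => c i = j).card : ℝ) := by
  ext i j
  rcases eq_or_ne i j with rfl | hij
  · simp [characteristicMatrix, mul_apply, ← ite_and]
  · rw [diagonal_apply_ne _ hij, mul_apply]
    exact Finset.sum_eq_zero fun l _ => by
      simp only [characteristicMatrix, transpose_apply, of_apply]; grind

variable {c : ι → κ}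

lemma card_cell_ne_zero (hc : Surjective c) (j : κ) :
    ((univ.filter fun i => c i = j).card : ℝ) ≠ 0 := by
  obtain ⟨i, hi⟩ := hc j
  exact Nat.cast_ne_zero.mpr (Finset.card_ne_zero_of_mem (a := i) (by simpa using hi))

variable [Fintype κ]

lemma isUnit_transpose_characteristicMatrix_mul_self (hc : Surjective c) :
    IsUnit ((characteristicMatrix c)ᵀ * characteristicMatrix c) := by
  rw [transpose_characteristicMatrix_mul_self, isUnit_diagonal, Pi.isUnit_iff]
  exact fun j => (card_cell_ne_zero hc j).isUnit

lemma rangeProj_characteristicMatrix_apply (hc : Surjective c) (i j : ι) :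
    rangeProj (characteristicMatrix c) i j =
      if c i = c j then 1 / ((univ.filter fun l => c l = c j).card : ℝ) else 0 := by
  have hinv : ((characteristicMatrix c)ᵀ * characteristicMatrix c)⁻¹ =
      diagonal fun j => 1 / ((univ.filter fun i => c i = j).card : ℝ) := by
    refine inv_eq_right_inv ?_
    rw [transpose_characteristicMatrix_mul_self, diagonal_mul_diagonal, ← diagonal_one]
    exact congr_arg diagonal (funext fun j => mul_one_div_cancel (card_cell_ne_zero hc j))
  rw [rangeProj, hinv]
  simp [characteristicMatrix, mul_apply, diagonal_apply]

variable {μ : Type*} [Fintype μ] [DecidableEq μ] [DecidableEq ι] {v : μ → ι}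

lemma norm_cplx_one_sub_rangeProj_submatrix_of_injective [Nonempty μ] (hc : Surjective c)
    (hcv : Injective (c ∘ v)) :
    ‖cplx ((1 - rangeProj (characteristicMatrix c)).submatrix v v)‖ =
      ⨆ i, (1 - 1 / ((univ.filter fun j => c j = c (v i)).card : ℝ)) := by
  have hdiag : (1 - rangeProj (characteristicMatrix c)).submatrix v v =
      diagonal fun i => 1 - 1 / ((univ.filter fun j => c j = c (v i)).card : ℝ) := by
    ext i j
    rcases eq_or_ne i j with rfl | hij
    · simp [rangeProj_characteristicMatrix_apply hc]
    · simp [rangeProj_characteristicMatrix_apply hc, hij, hcv.of_comp.ne hij,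
        show c (v i) ≠ c (v j) from hcv.ne hij]
  rw [hdiag, norm_cplx_diagonal fun i => ?_]
  have hone : (1 : ℝ) ≤ (univ.filter fun j => c j = c (v i)).card :=
    Nat.one_le_cast.mpr (Nat.pos_of_ne_zero (Nat.cast_ne_zero.mp (card_cell_ne_zero hc _)))
  exact sub_nonneg.mpr (div_le_one_of_le₀ hone (by positivity))

lemma norm_cplx_one_sub_rangeProj_submatrix_of_not_injective (hc : Surjective c)
    (hv : Injective v) (hcv : ¬ Injective (c ∘ v)) :
    ‖cplx ((1 - rangeProj (characteristicMatrix c)).submatrix v v)‖ = 1 := by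
  have hproj := (isStarProjection_rangeProj
    (isUnit_transpose_characteristicMatrix_mul_self hc)).one_sub
  refine le_antisymm ((norm_cplx_mul_leaderMatrix_sq hproj v).symm.trans_le
    (pow_le_one₀ (norm_nonneg _) (norm_cplx_mul_leaderMatrix_le_one hproj hv))) ?_
  obtain ⟨i, l, hil, hne⟩ := not_injective_iff.mp hcv
  replace hil : c (v i) = c (v l) := hil
  have hx : (Pi.single i 1 - Pi.single l 1 : μ → ℝ) ≠ 0 := fun h => by
    simpa [hne] using congrFun h i
  refine one_le_norm_cplx_of_mulVec_eq_self hx (funext fun j => ?_)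
  simp [mulVec_sub, rangeProj_characteristicMatrix_apply hc, hil, one_apply, hv.eq_iff,
    Pi.single_apply]

end Partition

theorem stmt12_general {N k m : ℕ} (hm : 0 < m) (L : Matrix (Fin N) (Fin N) ℝ)
    (hL : L.IsSymm) (v : Fin m → Fin N) (hv : Function.Injective v)
    (M : Matrix (Fin N) (Fin m) ℝ)
    (hM : M = Matrix.of fun i j => if i = v j then 1 else 0)
    (c : Fin N → Fin k) (hc : Function.Surjective c)
    (P : Matrix (Fin N) (Fin k) ℝ)
    (hP : P = Matrix.of fun i j => if c i = j then 1 else 0)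
    (hker : LinearMap.ker L.mulVecLin ≤ LinearMap.range P.mulVecLin)
    (hAEP : Submodule.map L.mulVecLin (LinearMap.range P.mulVecLin) ≤
      LinearMap.range P.mulVecLin)
    (Lhat : Matrix (Fin k) (Fin k) ℝ) (hLhat : Lhat = (Pᵀ * P)⁻¹ * (Pᵀ * L * P))
    (Mhat : Matrix (Fin k) (Fin m) ℝ) (hMhat : Mhat = (Pᵀ * P)⁻¹ * (Pᵀ * M)) :
    (Function.Injective (fun i => c (v i)) →
      HinfNorm (fun s => singleS L M s - singleShat L P Lhat Mhat s) ^ 2 =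
        ⨆ i : Fin m,
          (1 - 1 / ((Finset.univ.filter fun j : Fin N => c j = c (v i)).card : ℝ))) ∧
    (¬ Function.Injective (fun i => c (v i)) →
      HinfNorm (fun s => singleS L M s - singleShat L P Lhat Mhat s) ^ 2 = 1) := by
  obtain rfl : M = leaderMatrix v := hM
  obtain rfl : P = characteristicMatrix c := hP
  subst hLhat hMhat
  have : Nonempty (Fin m) := ⟨⟨0, hm⟩⟩
  have hgram := isUnit_transpose_characteristicMatrix_mul_self hc
  rw [hinfNorm_singleS_sub_singleShat hL hgram hker hAEP,
    norm_cplx_mul_leaderMatrix_sq (isStarProjection_rangeProj hgram).one_sub]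
  exact ⟨norm_cplx_one_sub_rangeProj_submatrix_of_injective hc,
    norm_cplx_one_sub_rangeProj_submatrix_of_not_injective hc hv⟩

/-- exact H∞ error for the single-integrator network clustered according to
an almost equitable partition. -/
theorem stmt12 {N k m : ℕ} (hm : 0 < m) (L : Matrix (Fin N) (Fin N) ℝ)
    (hLpsd : L.PosSemidef) (hL1 : L.mulVec (fun _ => 1) = 0)
    (hLker : LinearMap.ker L.mulVecLin = Submodule.span ℝ {(fun _ => 1 : Fin N → ℝ)})
    (v : Fin m → Fin N) (hv : Function.Injective v)
    (M : Matrix (Fin N) (Fin m) ℝ)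
    (hM : M = Matrix.of fun i j => if i = v j then 1 else 0)
    (c : Fin N → Fin k) (hc : Function.Surjective c)
    (P : Matrix (Fin N) (Fin k) ℝ)
    (hP : P = Matrix.of fun i j => if c i = j then 1 else 0)
    (hAEP : Submodule.map L.mulVecLin (LinearMap.range P.mulVecLin) ≤
      LinearMap.range P.mulVecLin)
    (Lhat : Matrix (Fin k) (Fin k) ℝ) (hLhat : Lhat = (Pᵀ * P)⁻¹ * (Pᵀ * L * P))
    (Mhat : Matrix (Fin k) (Fin m) ℝ) (hMhat : Mhat = (Pᵀ * P)⁻¹ * (Pᵀ * M)) :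
    (Function.Injective (fun i => c (v i)) →
      HinfNorm (fun s => singleS L M s - singleShat L P Lhat Mhat s) ^ 2 =
        ⨆ i : Fin m,
          (1 - 1 / ((Finset.univ.filter fun j : Fin N => c j = c (v i)).card : ℝ))) ∧
    (¬ Function.Injective (fun i => c (v i)) →
      HinfNorm (fun s => singleS L M s - singleShat L P Lhat Mhat s) ^ 2 = 1) :=
  stmt12_general hm L (by simpa using hLpsd.isHermitian) v hv M hM c hc P hP
    (hLker ▸ hP ▸ span_one_le_range_characteristicMatrix c) hAEP Lhat hLhat Mhat hMhat
end
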